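/- Let A ∈ ℝ^{m×n} with m ≤ n and A ≠ 0, with largest and smallest singular values σ₁ and σ_m, let k be a positive integer with 3k ≤ n, and let δ ∈ (0,1) be a restricted isometry constant of order 3k for A. Suppose ε > σ₁² and 0 ≤ λ ≤ ε + σ_m². Let x ∈ ℝ^n be k-sparse, y = Ax, let x^p ∈ ℝ^n be k-sparse, and let x^{p+1} be a hard k-thresholding of x^p + λ(AᵀA + εI)^{−1}Aᵀ(y − Ax^p). Then ‖x^{p+1} − x‖₂ ≤ √3 (δ + σ₁² − λσ₁²/(ε + σ₁²)) ‖x^p − x‖₂. -/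

import Mathlib

/-!
Put `e = xp - x` and `M = AᵀA`. In the noiseless case the thresholded vector `z` satisfies
`z - x = (e - M e) + (M e - λ (M + ε)⁻¹ M e)`.

Hard thresholding costs a factor `√3` compared with `z - x` restricted to `Ω = S ∪ supp x`
(`hardThresholding_bound`): entries of `x` missed by `S` are controlled by entries of `z`, which are
dominated by those selected outside `supp x`.

Since `Ω ∪ supp e` has at most `3k` elements, the first summand restricted to `Ω` has norm at most
`δ ‖e‖`, by polarizing the restricted isometry inequality (`norm2_restr_ric_le`). In an eigenbasis
of `M` the second summand acts by multiplication with `t ↦ t - λ t / (ε + t)`. The eigenvalues are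
`0` or lie in `[σm², σ1²]`, and there the condition `λ ≤ ε + σm²` makes this function nonnegative
and increasing, so it is at most its value at `σ1²` (`spectral_bound`).
-/

open Matrix Filter Topology

/-- Euclidean (ℓ₂) norm of a vector in ℝ^n. -/
noncomputable def norm2 {n : ℕ} (x : Fin n → ℝ) : ℝ := Real.sqrt (∑ i, x i ^ 2)

/-- Euclidean inner product. -/
def dot {n : ℕ} (u v : Fin n → ℝ) : ℝ := ∑ i, u i * v i

/-- Support of a vector. -/
def supp {n : ℕ} (x : Fin n → ℝ) : Set (Fin n) := {i | x i ≠ 0}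

/-- δ ∈ (0,1) is a restricted isometry constant of order q for A. -/
def IsRIC {m n : ℕ} (A : Matrix (Fin m) (Fin n) ℝ) (q : ℕ) (δ : ℝ) : Prop :=
  0 < δ ∧ δ < 1 ∧
    ∀ x : Fin n → ℝ, (supp x).ncard ≤ q →
      (1 - δ) * norm2 x ^ 2 ≤ norm2 (A.mulVec x) ^ 2 ∧
      norm2 (A.mulVec x) ^ 2 ≤ (1 + δ) * norm2 x ^ 2

/-- σ is the largest singular value (spectral norm) of A: it bounds ‖Av‖₂/‖v‖₂
and this bound is attained. -/
def IsMaxSingularValue {m n : ℕ} (A : Matrix (Fin m) (Fin n) ℝ) (σ : ℝ) : Prop :=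
  0 ≤ σ ∧ (∀ v : Fin n → ℝ, norm2 (A.mulVec v) ≤ σ * norm2 v) ∧
    ∃ v : Fin n → ℝ, v ≠ 0 ∧ norm2 (A.mulVec v) = σ * norm2 v

/-- For m ≤ n, σ is the smallest singular value of A, i.e. σ² is the smallest
eigenvalue of A Aᵀ: σ is the infimum of ‖Aᵀu‖₂/‖u‖₂ and it is attained. -/
def IsMinSingularValue {m n : ℕ} (A : Matrix (Fin m) (Fin n) ℝ) (σ : ℝ) : Prop :=
  0 ≤ σ ∧ (∀ u : Fin m → ℝ, σ * norm2 u ≤ norm2 (Aᵀ.mulVec u)) ∧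
    ∃ u : Fin m → ℝ, u ≠ 0 ∧ norm2 (Aᵀ.mulVec u) = σ * norm2 u

/-- w is a hard k-thresholding of z with associated index set S*. -/
def IsHardThresholding {n : ℕ} (k : ℕ) (z w : Fin n → ℝ) (S : Set (Fin n)) : Prop :=
  S.ncard = k ∧ (∀ i ∈ S, w i = z i) ∧ (∀ i ∉ S, w i = 0) ∧
    ∀ i ∈ S, ∀ j ∉ S, |z j| ≤ |z i|

/-! ### Euclidean norm and restriction to an index set -/

open WithLp in
lemma norm2_eq {n : ℕ} (v : Fin n → ℝ) : norm2 v = ‖toLp 2 v‖ := by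
  simp [norm2, EuclideanSpace.norm_eq]

lemma norm2_nonneg {n : ℕ} (v : Fin n → ℝ) : 0 ≤ norm2 v := Real.sqrt_nonneg _

lemma norm2_sq {n : ℕ} (v : Fin n → ℝ) : norm2 v ^ 2 = ∑ i, v i ^ 2 :=
  Real.sq_sqrt (Finset.sum_nonneg fun i _ => sq_nonneg _)

lemma norm2_sq_eq_dotProduct {n : ℕ} (v : Fin n → ℝ) : norm2 v ^ 2 = v ⬝ᵥ v := by
  rw [norm2_sq]; simp [dotProduct, sq]

lemma norm2_add_le {n : ℕ} (u v : Fin n → ℝ) : norm2 (u + v) ≤ norm2 u + norm2 v := by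
  simpa [norm2_eq] using norm_add_le (WithLp.toLp 2 u) (WithLp.toLp 2 v)

open Classical in
/-- The restriction of `v` to the index set `S`: coordinates outside `S` are set to zero. -/
noncomputable def restr {n : ℕ} (S : Set (Fin n)) (v : Fin n → ℝ) : Fin n → ℝ :=
  fun i => if i ∈ S then v i else 0

lemma restr_add {n : ℕ} (S : Set (Fin n)) (u v : Fin n → ℝ) :
    restr S (u + v) = restr S u + restr S v := by
  ext i; by_cases h : i ∈ S <;> simp [restr, h]

lemma norm2_restr_le {n : ℕ} (S : Set (Fin n)) (v : Fin n → ℝ) :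
    norm2 (restr S v) ≤ norm2 v := by
  apply Real.sqrt_le_sqrt
  refine Finset.sum_le_sum fun i _ => ?_
  by_cases h : i ∈ S <;> simp [restr, h, sq_nonneg]

lemma restr_dotProduct {n : ℕ} (S : Set (Fin n)) (v : Fin n → ℝ) :
    restr S v ⬝ᵥ v = norm2 (restr S v) ^ 2 := by
  rw [norm2_sq]
  refine Finset.sum_congr rfl fun i _ => ?_
  by_cases h : i ∈ S <;> simp [restr, h, sq]

/-! ### Restricted isometry in bilinear form -/

lemma mulVec_transpose_dotProduct {m n : ℕ} (A : Matrix (Fin m) (Fin n) ℝ) (u v : Fin n → ℝ) :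
    u ⬝ᵥ (Aᵀ * A) *ᵥ v = (A *ᵥ u) ⬝ᵥ (A *ᵥ v) := by
  rw [← mulVec_mulVec, dotProduct_mulVec, vecMul_transpose]

/-- Polarized form of the restricted isometry property: the bilinear form of `I - AᵀA` is bounded
by `δ` on vectors supported in a common set of size at most `q`. -/
lemma ric_bilin {m n q : ℕ} {A : Matrix (Fin m) (Fin n) ℝ} {δ : ℝ} (h : IsRIC A q δ)
    (T : Set (Fin n)) (hT : T.ncard ≤ q) (u v : Fin n → ℝ) (hu : supp u ⊆ T) (hv : supp v ⊆ T) :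
    u ⬝ᵥ (v - (Aᵀ * A) *ᵥ v) ≤ δ * (norm2 u * norm2 v) := by
  obtain ⟨h0, -, h⟩ := h
  set b := u ⬝ᵥ (v - (Aᵀ * A) *ᵥ v) with hb
  have hsub : ∀ t : ℝ, (supp (u + t • v)).ncard ≤ q := fun t => by
    refine (Set.ncard_le_ncard (fun i hi => ?_) T.toFinite).trans hT
    by_contra hc
    have h1 : u i = 0 := by by_contra h'; exact hc (hu h')
    have h2 : v i = 0 := by by_contra h'; exact hc (hv h')
    exact hi (by simp [h1, h2])
  -- Comparing `u + t v` with `u - t v` gives a quadratic in `t` that never becomes negative.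
  have key : ∀ t : ℝ, 0 ≤ (δ * norm2 v ^ 2) * (t * t) + (-2 * b) * t + δ * norm2 u ^ 2 := by
    intro t
    have h1 := (h _ (hsub t)).1
    have h2 := (h _ (hsub (-t))).2
    simp only [hb, dotProduct_sub, mulVec_transpose_dotProduct]
    simp only [norm2_sq_eq_dotProduct, mulVec_add, mulVec_smul, add_dotProduct, dotProduct_add,
      smul_dotProduct, dotProduct_smul, smul_eq_mul, dotProduct_comm v u,
      dotProduct_comm (A *ᵥ v) (A *ᵥ u)] at *
    nlinarith
  have hd := discrim_le_zero key
  unfold discrim at hd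
  refine abs_le_of_sq_le_sq' ?_ ?_ |>.2
  · nlinarith
  · have := norm2_nonneg u; have := norm2_nonneg v; positivity

lemma norm2_restr_ric_le {m n q : ℕ} {A : Matrix (Fin m) (Fin n) ℝ} {δ : ℝ} (h : IsRIC A q δ)
    (T Ω : Set (Fin n)) (hT : T.ncard ≤ q) (hΩ : Ω ⊆ T) (v : Fin n → ℝ) (hv : supp v ⊆ T) :
    norm2 (restr Ω (v - (Aᵀ * A) *ᵥ v)) ≤ δ * norm2 v := by
  set r := restr Ω (v - (Aᵀ * A) *ᵥ v) with hr
  have hb := ric_bilin h T hT r v (fun i hi => hΩ (by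
    by_contra hc; exact hi (by simp [hr, restr, hc]))) hv
  rw [hr, restr_dotProduct, ← hr] at hb
  rcases (norm2_nonneg r).eq_or_lt with h0 | h0
  · rw [← h0]; exact mul_nonneg h.1.le (norm2_nonneg v)
  · nlinarith

/-! ### Spectral estimates -/

lemma transpose_mul_self_isHermitian {m n : ℕ} (A : Matrix (Fin m) (Fin n) ℝ) :
    (Aᵀ * A).IsHermitian := by
  simpa using isHermitian_conjTranspose_mul_self A

/-- An eigenvalue of `AᵀA` is either zero or lies between `σm ^ 2` and `σ1 ^ 2`. -/
lemma eigenvalue_range {m n : ℕ} {A : Matrix (Fin m) (Fin n) ℝ} {σ1 σm : ℝ}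
    (hσ1 : IsMaxSingularValue A σ1) (hσm : IsMinSingularValue A σm) {μ : ℝ} {v : Fin n → ℝ}
    (hv : norm2 v = 1) (hμ : (Aᵀ * A) *ᵥ v = μ • v) :
    μ = 0 ∨ (0 < μ ∧ σm ^ 2 ≤ μ ∧ μ ≤ σ1 ^ 2) := by
  have hAv : norm2 (A *ᵥ v) ^ 2 = μ := by
    rw [norm2_sq_eq_dotProduct, ← mulVec_transpose_dotProduct, hμ, dotProduct_smul,
      ← norm2_sq_eq_dotProduct, hv]; simp
  have hATAv : norm2 (Aᵀ *ᵥ (A *ᵥ v)) ^ 2 = μ ^ 2 := by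
    rw [mulVec_mulVec, hμ, norm2_sq_eq_dotProduct, dotProduct_smul, smul_dotProduct,
      ← norm2_sq_eq_dotProduct, hv]; simp [sq]
  have h1 := pow_le_pow_left₀ (norm2_nonneg _) (hσ1.2.1 v) 2
  have h2 := pow_le_pow_left₀ (mul_nonneg hσm.1 (norm2_nonneg _)) (hσm.2.1 (A *ᵥ v)) 2
  rw [hv, hAv, mul_one] at h1
  rw [hATAv, mul_pow, hAv] at h2
  have h0 : 0 ≤ μ := hAv ▸ sq_nonneg _
  rcases h0.eq_or_lt with h0 | h0
  · exact Or.inl h0.symm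
  · exact Or.inr ⟨h0, by nlinarith, h1⟩

/-- The spectral symbol `t ↦ t - λ t / (ε + t)` is nonnegative and increasing on `[sm, s1]` and
vanishes at `0`, so on `{0} ∪ [sm, s1]` it is largest at `s1`. The lemma is applied with
`sm = σm ^ 2` and `s1 = σ1 ^ 2`. -/
lemma symbol_bound {s1 sm ε lam μ : ℝ} (hs1 : 0 ≤ s1) (hms : sm ≤ s1) (hε : 0 < ε)
    (hlam : lam ≤ ε + sm) (hμ : μ = 0 ∨ (0 < μ ∧ sm ≤ μ ∧ μ ≤ s1)) :
    0 ≤ μ - lam * μ / (ε + μ) ∧ μ - lam * μ / (ε + μ) ≤ s1 - lam * s1 / (ε + s1) := by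
  have hp : 0 < ε + s1 := by linarith
  rcases hμ with rfl | ⟨h0, h1, h2⟩
  · simp only [mul_zero, zero_div, sub_zero, le_refl, true_and, sub_nonneg]
    rw [div_le_iff₀ hp]; nlinarith
  · have hq : 0 < ε + μ := by linarith
    constructor
    · rw [sub_nonneg, div_le_iff₀ hq]; nlinarith
    · have : s1 - lam * s1 / (ε + s1) - (μ - lam * μ / (ε + μ))
          = (s1 - μ) * ((ε + s1) * (ε + μ) - lam * ε) / ((ε + s1) * (ε + μ)) := by
        field_simp; ring
      have h3 : 0 ≤ (ε + s1) * (ε + μ) - lam * ε := by nlinarith [mul_nonneg hs1 hq.le]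
      have : 0 ≤ (s1 - μ) * ((ε + s1) * (ε + μ) - lam * ε) / ((ε + s1) * (ε + μ)) :=
        div_nonneg (mul_nonneg (by linarith) h3) (mul_pos hp hq).le
      linarith

/-- Spectral bound for `AᵀA - λ (AᵀA + ε)⁻¹ AᵀA` applied to `e`; the vector `g` stands for
`(AᵀA + ε)⁻¹ AᵀA e` and is described by the linear system it solves. -/
lemma spectral_bound {m n : ℕ} {A : Matrix (Fin m) (Fin n) ℝ} {σ1 σm : ℝ}
    (hσ1 : IsMaxSingularValue A σ1) (hσm : IsMinSingularValue A σm) (hms : σm ^ 2 ≤ σ1 ^ 2)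
    {ε lam : ℝ} (hε : 0 < ε) (hlam : lam ≤ ε + σm ^ 2)
    (e g : Fin n → ℝ) (hg : (Aᵀ * A) *ᵥ g + ε • g = (Aᵀ * A) *ᵥ e) :
    norm2 ((Aᵀ * A) *ᵥ e - lam • g) ≤ (σ1 ^ 2 - lam * σ1 ^ 2 / (ε + σ1 ^ 2)) * norm2 e := by
  have hM := transpose_mul_self_isHermitian A
  set b := hM.eigenvectorBasis
  set μ := hM.eigenvalues
  have parseval : ∀ v : Fin n → ℝ, norm2 v ^ 2 = ∑ i, ((b i).ofLp ⬝ᵥ v) ^ 2 := fun v => by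
    rw [norm2_eq, ← b.sum_sq_norm_inner_right]
    simp [EuclideanSpace.inner_eq_star_dotProduct, dotProduct_comm]
  have hbM : ∀ i, (Aᵀ * A) *ᵥ (b i).ofLp = μ i • (b i).ofLp := fun i =>
    hM.mulVec_eigenvectorBasis i
  have hbv : ∀ i v, (b i).ofLp ⬝ᵥ (Aᵀ * A) *ᵥ v = μ i * ((b i).ofLp ⬝ᵥ v) := fun i v => by
    rw [mulVec_transpose_dotProduct, dotProduct_comm, ← mulVec_transpose_dotProduct, hbM,
      dotProduct_smul, dotProduct_comm, smul_eq_mul]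
  have hnorm : ∀ i, norm2 (b i).ofLp = 1 := fun i => by
    rw [norm2_eq]; exact b.orthonormal.1 i
  have hrange := fun i => eigenvalue_range hσ1 hσm (hnorm i) (hbM i)
  have hμ0 : ∀ i, 0 ≤ μ i := fun i => by
    rcases hrange i with h | h
    · exact h.ge
    · exact h.1.le
  have hsym := fun i => symbol_bound (sq_nonneg σ1) hms hε hlam (hrange i)
  have hcoef : ∀ i, (b i).ofLp ⬝ᵥ ((Aᵀ * A) *ᵥ e - lam • g)
      = (μ i - lam * μ i / (ε + μ i)) * ((b i).ofLp ⬝ᵥ e) := fun i => by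
    have h := congrArg (fun w => (b i).ofLp ⬝ᵥ w) hg
    simp only [dotProduct_add, hbv, dotProduct_smul, smul_eq_mul] at h
    have hq : 0 < ε + μ i := by linarith [hμ0 i]
    have h' : (b i).ofLp ⬝ᵥ g = μ i / (ε + μ i) * ((b i).ofLp ⬝ᵥ e) := by
      field_simp; linarith
    rw [dotProduct_sub, dotProduct_smul, hbv, h', smul_eq_mul]; ring
  have hc := (symbol_bound (sq_nonneg σ1) hms hε hlam (Or.inl rfl)).2
  simp only [mul_zero, zero_div, sub_zero] at hc
  refine abs_le_of_sq_le_sq' ?_ (mul_nonneg hc (norm2_nonneg e)) |>.2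
  rw [mul_pow, parseval, parseval, Finset.mul_sum]
  refine Finset.sum_le_sum fun i _ => ?_
  rw [hcoef, mul_pow]
  exact mul_le_mul_of_nonneg_right (pow_le_pow_left₀ (hsym i).1 (hsym i).2 2) (sq_nonneg _)

/-! ### Hard thresholding -/

/-- If every value of `f` on `P` is at most every value on the no smaller set `Q`, the sums of `f`
compare in the same way. -/
lemma sum_le_sum_of_card_le {α : Type*} (f : α → ℝ) (hf : ∀ i, 0 ≤ f i) (P Q : Finset α)
    (hc : P.card ≤ Q.card) (h : ∀ j ∈ P, ∀ i ∈ Q, f j ≤ f i) : ∑ j ∈ P, f j ≤ ∑ i ∈ Q, f i := by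
  rcases P.eq_empty_or_nonempty with rfl | hP
  · simpa using Finset.sum_nonneg fun i _ => hf i
  · obtain ⟨j, hj, hmax⟩ := P.exists_max_image f hP
    calc ∑ j ∈ P, f j ≤ P.card • f j := Finset.sum_le_card_nsmul _ _ _ hmax
      _ ≤ Q.card • f j := nsmul_le_nsmul_left (hf j) hc
      _ ≤ ∑ i ∈ Q, f i := Finset.card_nsmul_le_sum _ _ _ fun i hi => h j hj i hi

/-- Hard thresholding loses at most a factor `√3`, measured on the union of the selected index set
and the support of the sparse target `x`. -/
lemma hardThresholding_bound {n k : ℕ} (z w x : Fin n → ℝ) (S : Set (Fin n))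
    (h : IsHardThresholding k z w S) (hx : (supp x).ncard ≤ k) :
    norm2 (w - x) ≤ √3 * norm2 (restr (S ∪ supp x) (z - x)) := by
  classical
  obtain ⟨hcard, hin, hout, hle⟩ := h
  set P : Finset (Fin n) := (supp x \ S).toFinset
  set Q : Finset (Fin n) := (S \ supp x).toFinset
  have hPQ : P.card ≤ Q.card := by
    rw [← Set.ncard_eq_toFinset_card', ← Set.ncard_eq_toFinset_card']
    have h1 := Set.ncard_inter_add_ncard_sdiff_eq_ncard (supp x) S
    have h2 := Set.ncard_inter_add_ncard_sdiff_eq_ncard S (supp x)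
    rw [Set.inter_comm] at h2
    omega
  have hz : ∑ j ∈ P, z j ^ 2 ≤ ∑ i ∈ Q, z i ^ 2 := by
    refine sum_le_sum_of_card_le (fun i => z i ^ 2) (fun i => sq_nonneg _) P Q hPQ ?_
    intro j hj i hi
    simp only [P, Q, Set.mem_toFinset, Set.mem_sdiff] at hj hi
    exact sq_le_sq.2 (hle i hi.1 j hj.2)
  have hz' : 0 ≤ ∑ i, ((if i ∈ Q then z i ^ 2 else 0) - (if i ∈ P then z i ^ 2 else 0)) := by
    rw [Finset.sum_sub_distrib, ← Finset.sum_filter, ← Finset.sum_filter,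
      Finset.filter_mem_eq_inter, Finset.filter_mem_eq_inter, Finset.univ_inter,
      Finset.univ_inter]
    linarith
  -- On `P` use `x² ≤ 2 (z - x)² + 2 z²`; the excess `2 z²` is paid for by `Q`, where `x = 0`.
  have hmain : norm2 (w - x) ^ 2 ≤ 3 * norm2 (restr (S ∪ supp x) (z - x)) ^ 2 := by
    rw [norm2_sq, norm2_sq, Finset.mul_sum]
    suffices H : ∀ i, (w - x) i ^ 2 ≤ 3 * restr (S ∪ supp x) (z - x) i ^ 2
        - 2 * ((if i ∈ Q then z i ^ 2 else 0) - (if i ∈ P then z i ^ 2 else 0)) by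
      have := Finset.sum_le_sum fun i (_ : i ∈ Finset.univ) => H i
      rw [Finset.sum_sub_distrib, ← Finset.mul_sum (s := Finset.univ) (a := (2 : ℝ))] at this
      linarith
    intro i
    simp only [P, Q, Set.mem_toFinset, Set.mem_sdiff, restr, Set.mem_union, Pi.sub_apply]
    by_cases hS : i ∈ S <;> by_cases hX : i ∈ supp x
    · simp only [hS, hX, hin i hS]; simp; nlinarith [sq_nonneg (z i - x i)]
    · have : x i = 0 := by simpa [supp] using hX
      simp only [hS, hX, hin i hS, this]; simp; nlinarith [sq_nonneg (z i)]
    · simp only [hS, hX, hout i hS]; simp; nlinarith [sq_nonneg (2 * z i - x i), sq_nonneg (z i - x i)]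
    · have : x i = 0 := by simpa [supp] using hX
      simp [hS, hX, hout i hS, this]
  refine abs_le_of_sq_le_sq' ?_ (mul_nonneg (Real.sqrt_nonneg _) (norm2_nonneg _)) |>.2
  rwa [mul_pow, Real.sq_sqrt (by norm_num)]

/-! ### Invertibility and comparison of singular values -/

lemma transpose_mul_self_add_isUnit_det {m n : ℕ} (A : Matrix (Fin m) (Fin n) ℝ) {ε : ℝ}
    (hε : 0 < ε) : IsUnit (Aᵀ * A + ε • (1 : Matrix (Fin n) (Fin n) ℝ)).det := by
  have h1 : (Aᵀ * A).PosSemidef := by simpa using posSemidef_conjTranspose_mul_self A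
  have h2 : (ε • (1 : Matrix (Fin n) (Fin n) ℝ)).PosDef := PosDef.one.smul hε
  exact (h2.posSemidef_add h1).det_pos.ne'.isUnit

/-- The smallest singular value does not exceed the largest: for `u ≠ 0` in the range of `A`,
`σm ‖u‖ ≤ ‖Aᵀu‖ ≤ σ1 ‖u‖`. -/
lemma sq_le_of_min_max {m n : ℕ} {A : Matrix (Fin m) (Fin n) ℝ} {σ1 σm : ℝ} (hA : A ≠ 0)
    (hσ1 : IsMaxSingularValue A σ1) (hσm : IsMinSingularValue A σm) : σm ^ 2 ≤ σ1 ^ 2 := by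
  have hσ : ∃ v, A *ᵥ v ≠ 0 := by
    by_contra! h
    exact hA (Matrix.ext_of_mulVec_single fun i => by rw [h, zero_mulVec])
  obtain ⟨v, hv⟩ := hσ
  -- `‖Aᵀ u‖² = ⟨u, A Aᵀ u⟩ ≤ ‖u‖ σ1 ‖Aᵀ u‖` with `u = A v`.
  set u := A *ᵥ v
  have hu : 0 < norm2 u := (norm2_nonneg u).lt_of_ne fun h => hv <| by
    rw [norm2_eq, eq_comm, norm_eq_zero] at h
    simpa using congrArg WithLp.ofLp h
  have h1 := hσm.2.1 u
  have h2 := hσ1.2.1 (Aᵀ *ᵥ u)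
  have h3 : norm2 (Aᵀ *ᵥ u) ^ 2 ≤ norm2 u * norm2 (A *ᵥ (Aᵀ *ᵥ u)) := by
    rw [norm2_sq_eq_dotProduct, dotProduct_mulVec, vecMul_transpose, dotProduct_comm]
    have := real_inner_le_norm (WithLp.toLp 2 (A *ᵥ (Aᵀ *ᵥ u))) (WithLp.toLp 2 u)
    rw [← norm2_eq, ← norm2_eq, mul_comm] at this
    simpa [EuclideanSpace.inner_eq_star_dotProduct] using this
  have h4 : norm2 (Aᵀ *ᵥ u) ≤ σ1 * norm2 u := by
    rcases (norm2_nonneg (Aᵀ *ᵥ u)).eq_or_lt with h0 | h0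
    · rw [← h0]; exact mul_nonneg hσ1.1 hu.le
    · nlinarith
  exact pow_le_pow_left₀ hσm.1 (le_of_mul_le_mul_right (h1.trans h4) hu) 2


/-! ### The error bound for one iteration -/

/-- one NSIHT iteration, noiseless error reduction bound. -/
theorem stmt_7 {m n : ℕ} (hmn : m ≤ n) (A : Matrix (Fin m) (Fin n) ℝ) (hA : A ≠ 0)
    (σ1 σm : ℝ) (hσ1 : IsMaxSingularValue A σ1) (hσm : IsMinSingularValue A σm)
    (k : ℕ) (hk : 0 < k) (hkn : 3 * k ≤ n)
    (δ : ℝ) (hδ : IsRIC A (3 * k) δ)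
    (ε lam : ℝ) (hε : σ1 ^ 2 < ε) (hlam0 : 0 ≤ lam) (hlam : lam ≤ ε + σm ^ 2)
    (x : Fin n → ℝ) (hx : (supp x).ncard ≤ k) (y : Fin m → ℝ) (hy : y = A.mulVec x)
    (xp xp1 : Fin n → ℝ) (hxp : (supp xp).ncard ≤ k)
    (hiter : ∃ S : Set (Fin n),
      IsHardThresholding k
        (xp + lam • ((Aᵀ * A + ε • (1 : Matrix (Fin n) (Fin n) ℝ))⁻¹).mulVec
          (Aᵀ.mulVec (y - A.mulVec xp)))
        xp1 S) :
    norm2 (xp1 - x) ≤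
      Real.sqrt 3 * (δ + σ1 ^ 2 - lam * σ1 ^ 2 / (ε + σ1 ^ 2)) * norm2 (xp - x) := by
  obtain ⟨S, hS⟩ := hiter
  have hε0 : 0 < ε := (sq_nonneg σ1).trans_lt hε
  have hms : σm ^ 2 ≤ σ1 ^ 2 := sq_le_of_min_max hA hσ1 hσm
  set e := xp - x with he
  set N := Aᵀ * A + ε • (1 : Matrix (Fin n) (Fin n) ℝ) with hN
  set g := N⁻¹ *ᵥ ((Aᵀ * A) *ᵥ e) with hgdef
  have hg : (Aᵀ * A) *ᵥ g + ε • g = (Aᵀ * A) *ᵥ e := by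
    have h : N *ᵥ g = (Aᵀ * A) *ᵥ e := by
      rw [hgdef, mulVec_mulVec, mul_nonsing_inv _ (transpose_mul_self_add_isUnit_det A hε0),
        one_mulVec]
    rw [← h, hN, add_mulVec, smul_mulVec, one_mulVec]
  have hz : xp + lam • N⁻¹ *ᵥ (Aᵀ *ᵥ (y - A *ᵥ xp)) - x
      = (e - (Aᵀ * A) *ᵥ e) + ((Aᵀ * A) *ᵥ e - lam • g) := by
    have : Aᵀ *ᵥ (y - A *ᵥ xp) = -((Aᵀ * A) *ᵥ e) := by
      rw [hy, ← mulVec_sub, mulVec_mulVec, ← mulVec_neg, he, neg_sub]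
    rw [this, mulVec_neg, ← hgdef, he]
    module
  have hthr := hardThresholding_bound _ _ x S hS hx
  rw [hz, restr_add] at hthr
  have hT : (S ∪ supp x ∪ supp xp).ncard ≤ 3 * k := by
    have h1 := Set.ncard_union_le (S ∪ supp x) (supp xp)
    have h2 := Set.ncard_union_le S (supp x)
    have h3 := hS.1
    omega
  have hsupp : supp e ⊆ S ∪ supp x ∪ supp xp := by
    intro i hi
    by_contra hc
    simp only [Set.mem_union, not_or, supp, Set.mem_ofPred_eq, not_not] at hc
    exact hi (by simp [he, hc])
  have h1 := norm2_restr_ric_le hδ _ (S ∪ supp x) hT Set.subset_union_left e hsupp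
  have h2 := (norm2_restr_le (S ∪ supp x) _).trans
    (spectral_bound hσ1 hσm hms hε0 hlam e g hg)
  calc norm2 (xp1 - x) ≤ _ := hthr
    _ ≤ √3 * (δ * norm2 e + (σ1 ^ 2 - lam * σ1 ^ 2 / (ε + σ1 ^ 2)) * norm2 e) :=
        mul_le_mul_of_nonneg_left ((norm2_add_le _ _).trans (add_le_add h1 h2))
          (Real.sqrt_nonneg _)
    _ = _ := by ring
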